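/- arXiv:math/0108034 — 4 statements merged into one kernel-verified Lean document; each statement's English description precedes it below -/
import Mathlib

section
/- Let A be a ring with identity, M a fixed left A-module, and E = End_A(M)^op, so that M is a right E-module and for any A-module N the space Hom_A(M,N) is a left E-module by composition. If N is a static A-module with respect to M (i.e., the A-module map φ : M ⊗_E Hom_A(M,N) → N, φ(m ⊗ f) = f(m), is an isomorphism), then the E-module Hom_A(M,N) is static with respect to M (i.e., the E-module map ψ : Hom_A(M,N) → Hom_A(M, M ⊗_E Hom_A(M,N)), ψ(u)(m) = m ⊗ u, is an isomorphism). -/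
open TensorProduct Pointwise MulOpposite

set_option synthInstance.maxHeartbeats 1000000
set_option maxHeartbeats 2000000

noncomputable section

/-- The left module structure of `E = End_A(M)ᵐᵒᵖ` on `Hom_A(M,N)`, given by
precomposition: `e • f = f ∘ e.unop`. -/
instance endOpModuleHom (A M N : Type*) [Ring A] [AddCommGroup M] [Module A M]
    [AddCommGroup N] [Module A N] : Module (Module.End A M)ᵐᵒᵖ (M →ₗ[A] N) where
  smul e f := f ∘ₗ e.unop
  one_smul f := rfl
  mul_smul e₁ e₂ f := rfl
  smul_zero e := rfl
  smul_add e f g := rfl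
  add_smul e₁ e₂ f := by ext m; simp [HSMul.hSMul, SMul.smul]
  zero_smul f := by ext m; simp [HSMul.hSMul, SMul.smul]

theorem endOp_smul_hom_apply {A M N : Type*} [Ring A] [AddCommGroup M] [Module A M]
    [AddCommGroup N] [Module A N] (e : (Module.End A M)ᵐᵒᵖ) (f : M →ₗ[A] N) (m : M) :
    (e • f) m = f (e.unop m) := rfl

section Bal

variable (S : Type*) [Ring S] (Amb : Type*) [Ring Amb]
variable (M U : Type*) [AddCommGroup M] [AddCommGroup U]
variable [Module S M] [Module Amb M] [Module Sᵐᵒᵖ U]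

/-- The relations defining the balanced tensor product `M ⊗_{Sᵐᵒᵖ} U` of the
right `Sᵐᵒᵖ`-module `M` (i.e. left `S`-module) with the left `Sᵐᵒᵖ`-module `U`:
the elements `(m·s) ⊗ u - m ⊗ (s·u)`.  The ambient ring `Amb` acts on `M`
commuting with `S`, so the span over `Amb` coincides with the span over `ℤ`. -/
def balRel : Submodule Amb (M ⊗[ℤ] U) :=
  Submodule.span Amb
    {x | ∃ (s : S) (m : M) (u : U),
      x = (s • m) ⊗ₜ[ℤ] u - m ⊗ₜ[ℤ] ((MulOpposite.op s) • u)}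

/-- The balanced tensor product `M ⊗_{Sᵐᵒᵖ} U`, as an `Amb`-module. -/
def BalT := (M ⊗[ℤ] U) ⧸ balRel S Amb M U

instance : AddCommGroup (BalT S Amb M U) :=
  inferInstanceAs (AddCommGroup ((M ⊗[ℤ] U) ⧸ balRel S Amb M U))

instance : Module Amb (BalT S Amb M U) :=
  inferInstanceAs (Module Amb ((M ⊗[ℤ] U) ⧸ balRel S Amb M U))

instance (R : Type*) [Semiring R] [SMul R Amb] [Module R (M ⊗[ℤ] U)]
    [IsScalarTower R Amb (M ⊗[ℤ] U)] : Module R (BalT S Amb M U) :=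
  inferInstanceAs (Module R ((M ⊗[ℤ] U) ⧸ balRel S Amb M U))

instance (R : Type*) [Semiring R] [SMul R Amb] [Module R (M ⊗[ℤ] U)]
    [IsScalarTower R Amb (M ⊗[ℤ] U)] : IsScalarTower R Amb (BalT S Amb M U) :=
  inferInstanceAs (IsScalarTower R Amb ((M ⊗[ℤ] U) ⧸ balRel S Amb M U))

/-- The class of `m ⊗ u` in the balanced tensor product. -/
def BalT.mk (m : M) (u : U) : BalT S Amb M U :=
  Submodule.Quotient.mk (m ⊗ₜ[ℤ] u)

end Bal

section PhiPsi

variable (A M : Type*) [Ring A] [AddCommGroup M] [Module A M]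

/-- Evaluation `m ↦ (f ↦ f m)`, as an `A`-linear map into `ℤ`-linear maps. -/
def evMap (N : Type*) [AddCommGroup N] [Module A N] :
    M →ₗ[A] ((M →ₗ[A] N) →ₗ[ℤ] N) where
  toFun m :=
    { toFun := fun f => f m
      map_add' := fun _ _ => rfl
      map_smul' := fun _ _ => rfl }
  map_add' m₁ m₂ := by ext f; exact f.map_add _ _
  map_smul' a m := by ext f; exact f.map_smul a m

/-- The canonical `A`-linear map `φ : M ⊗_E Hom_A(M,N) → N`, `φ(m ⊗ f) = f m`,
where `E = End_A(M)ᵐᵒᵖ`.  `N` is static with respect to `M` iff `φ` is an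
isomorphism, i.e. iff `φ` is bijective. -/
def phiMap (N : Type*) [AddCommGroup N] [Module A N] :
    BalT (Module.End A M) A M (M →ₗ[A] N) →ₗ[A] N :=
  Submodule.liftQ _ (TensorProduct.AlgebraTensorModule.lift (evMap A M N)) (by
    rw [balRel, Submodule.span_le]
    rintro x ⟨s, m, f, rfl⟩
    simp only [SetLike.mem_coe, LinearMap.mem_ker, map_sub]
    have h1 : (TensorProduct.AlgebraTensorModule.lift (evMap A M N)) ((s • m) ⊗ₜ[ℤ] f)
        = f (s • m) := rfl
    have h2 : (TensorProduct.AlgebraTensorModule.lift (evMap A M N))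
        (m ⊗ₜ[ℤ] ((MulOpposite.op s) • f)) = f (s m) := rfl
    rw [h1, h2]
    exact sub_self _)

theorem phiMap_mk (N : Type*) [AddCommGroup N] [Module A N] (m : M) (f : M →ₗ[A] N) :
    phiMap A M N (BalT.mk _ _ _ _ m f) = f m := rfl

/-- `m ↦ m ⊗ u`, as an `A`-linear map `M → M ⊗[ℤ] U`. -/
def tmulRight (U : Type*) [AddCommGroup U] (u : U) : M →ₗ[A] (M ⊗[ℤ] U) where
  toFun m := m ⊗ₜ[ℤ] u
  map_add' _ _ := TensorProduct.add_tmul _ _ _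
  map_smul' a m := (TensorProduct.smul_tmul' a m u).symm

/-- The canonical map `ψ : U → Hom_A(M, M ⊗_E U)`, `ψ(u)(m) = m ⊗ u`, for a left
`E`-module `U`, where `E = End_A(M)ᵐᵒᵖ`.  `U` is static with respect to `M` iff
`ψ` is an isomorphism of `E`-modules. -/
def psiMap (U : Type*) [AddCommGroup U] [Module (Module.End A M)ᵐᵒᵖ U] :
    U → (M →ₗ[A] BalT (Module.End A M) A M U) := fun u =>
  (balRel (Module.End A M) A M U).mkQ ∘ₗ tmulRight A M U u

end PhiPsi

/-- Let `A` be a ring, `M` an `A`-module, `E = End_A(M)ᵒᵖ`.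
If `N` is a static `A`-module with respect to `M` (the canonical `A`-linear map
`φ : M ⊗_E Hom_A(M,N) → N`, `φ(m ⊗ f) = f m`, is an isomorphism), then the
`E`-module `Hom_A(M,N)` is static with respect to `M`: the canonical map
`ψ : Hom_A(M,N) → Hom_A(M, M ⊗_E Hom_A(M,N))`, `ψ(u)(m) = m ⊗ u`, is bijective
and `E`-linear, hence an isomorphism of `E`-modules. -/
theorem stmt_0 (A M N : Type*) [Ring A] [AddCommGroup M] [Module A M]
    [AddCommGroup N] [Module A N]
    (hstatic : Function.Bijective (phiMap A M N)) :
    Function.Bijective (psiMap A M (M →ₗ[A] N)) ∧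
      ∀ (e : (Module.End A M)ᵐᵒᵖ) (g : M →ₗ[A] N),
        psiMap A M (M →ₗ[A] N) (e • g) = e • psiMap A M (M →ₗ[A] N) g := by
  -- `φ ∘ ψ(u) = u`, as both send `m` to `u m`.
  have hcomp : ∀ u : M →ₗ[A] N, phiMap A M N ∘ₗ psiMap A M (M →ₗ[A] N) u = u :=
    fun u => LinearMap.ext fun m => phiMap_mk A M N m u
  refine ⟨⟨fun u v huv => ?_, fun h => ⟨phiMap A M N ∘ₗ h, ?_⟩⟩, fun e g => ?_⟩
  · rw [← hcomp u, huv, hcomp v]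
  -- Surjectivity: `ψ(φ ∘ h)` and `h` agree after composing with the injective map `φ`.
  · exact LinearMap.ext fun m =>
      hstatic.injective (LinearMap.congr_fun (hcomp (phiMap A M N ∘ₗ h)) m)
  -- The balancing relation `m ⊗ e • g = (e.unop • m) ⊗ g` makes `ψ` an `E`-linear map.
  · refine LinearMap.ext fun m => Eq.symm ?_
    exact (Submodule.Quotient.eq _).2 (Submodule.subset_span ⟨e.unop, m, g, rfl⟩)
end
end

section
/- Let k be an algebraically closed field, B ⊂ A algebras over k, V a finite-dimensional simple B-module, M = V↑^A = A ⊗_B V, and N a finite-dimensional A-module such that the restriction N↓_B is isomorphic to a direct sum of n copies of V. Then the B-module map γ : V ⊗_k Hom_A(M,N) → N↓_B given by γ(v ⊗ f) = f(1 ⊗ v), where B acts only on the left tensor factor of V ⊗_k Hom_A(M,N), is an isomorphism. -/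
/-!
By the universal property of the induced module, every `B`-linear map `g : V → N` extends to a
unique `A`-linear map `V↑^A → N` sending `1 ⊗ v` to `g v` (`indLift`, `ind_hom_ext`), so
`Hom_A(V↑^A, N) ≅ Hom_B(V, N↓_B)`.  Let `f i` be the extensions of the `n` coordinate inclusions
`V → V^n ≅ N↓_B`.  By Schur's lemma over the algebraically closed field `k`, each coordinate of a
`B`-linear map `V → V^n` is a scalar, so the `f i` span `Hom_A(V↑^A, N)` over `k` and every
element of `V ⊗_k Hom_A(V↑^A, N)` has the form `∑ i, w i ⊗ f i`.  The map `γ` sends this element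
to the element of `N` with coordinate vector `w`; hence it is surjective, and it is injective
because `w = 0` forces the tensor to vanish.
-/

open TensorProduct Pointwise MulOpposite

set_option synthInstance.maxHeartbeats 1000000
set_option maxHeartbeats 2000000

noncomputable section

section Ind

variable {Bc Sc : Type*} [Ring Bc] [Ring Sc] (f : Bc →+* Sc)
variable (V : Type*) [AddCommGroup V] [Module Bc V]

/-- The relations defining the induced module `V↑ = Sc ⊗_{Bc} V` along the ring
homomorphism `f : Bc →+* Sc`: the elements `(s·f(b)) ⊗ v - s ⊗ (b·v)`. -/
def indRel : Submodule Sc (Sc ⊗[ℤ] V) :=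
  Submodule.span Sc
    {x | ∃ (s : Sc) (b : Bc) (v : V), x = (s * f b) ⊗ₜ[ℤ] v - s ⊗ₜ[ℤ] (b • v)}

/-- The induced module `V↑ = Sc ⊗_{Bc} V` along `f : Bc →+* Sc`, with the ring
`Sc` acting by multiplication on the first factor. -/
def Ind := (Sc ⊗[ℤ] V) ⧸ indRel f V

instance : AddCommGroup (Ind f V) :=
  inferInstanceAs (AddCommGroup ((Sc ⊗[ℤ] V) ⧸ indRel f V))

instance : Module Sc (Ind f V) :=
  inferInstanceAs (Module Sc ((Sc ⊗[ℤ] V) ⧸ indRel f V))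

instance (R : Type*) [Semiring R] [SMul R Sc] [Module R (Sc ⊗[ℤ] V)]
    [IsScalarTower R Sc (Sc ⊗[ℤ] V)] : Module R (Ind f V) :=
  inferInstanceAs (Module R ((Sc ⊗[ℤ] V) ⧸ indRel f V))

instance (R : Type*) [Semiring R] [SMul R Sc] [Module R (Sc ⊗[ℤ] V)]
    [IsScalarTower R Sc (Sc ⊗[ℤ] V)] : IsScalarTower R Sc (Ind f V) :=
  inferInstanceAs (IsScalarTower R Sc ((Sc ⊗[ℤ] V) ⧸ indRel f V))

/-- The class of `s ⊗ v` in the induced module. -/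
def Ind.mk (s : Sc) (v : V) : Ind f V := Submodule.Quotient.mk (s ⊗ₜ[ℤ] v)

/-- The canonical map `V → V↑`, `v ↦ 1 ⊗ v`. -/
def Ind.of (v : V) : Ind f V := Ind.mk f V 1 v

end Ind

section Gamma

variable (k : Type*) [Field k] (A : Type*) [Ring A] [Algebra k A] (B : Subalgebra k A)
variable (V : Type*) [AddCommGroup V] [Module k V] [Module ↥B V] [IsScalarTower k ↥B V]
variable (N : Type*) [AddCommGroup N] [Module A N] [Module k N] [IsScalarTower k A N]

/-- `v ↦ (f ↦ f(1 ⊗ v))`, as a `B`-linear map. -/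
def gammaAux : V →ₗ[↥B] (((Ind B.val.toRingHom V) →ₗ[A] N) →ₗ[k] N) where
  toFun v :=
    { toFun := fun f => f (Ind.of B.val.toRingHom V v)
      map_add' := fun _ _ => rfl
      map_smul' := fun _ _ => rfl }
  map_add' v w := by
    ext f
    show f (Ind.of B.val.toRingHom V (v + w)) = f _ + f _
    rw [show Ind.of B.val.toRingHom V (v + w)
        = Ind.of B.val.toRingHom V v + Ind.of B.val.toRingHom V w by
      show Submodule.Quotient.mk ((1 : A) ⊗ₜ[ℤ] (v + w)) = _
      rw [TensorProduct.tmul_add]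
      show Submodule.Quotient.mk (((1 : A) ⊗ₜ[ℤ] v) + ((1 : A) ⊗ₜ[ℤ] w))
        = Submodule.Quotient.mk ((1 : A) ⊗ₜ[ℤ] v) + Submodule.Quotient.mk ((1 : A) ⊗ₜ[ℤ] w)
      exact Submodule.Quotient.mk_add _, map_add]
  map_smul' b v := by
    ext f
    show f (Ind.of B.val.toRingHom V (b • v)) = ((b : A) • f (Ind.of B.val.toRingHom V v) : N)
    rw [← map_smul,
      show (b : A) • Ind.of B.val.toRingHom V v = Ind.of B.val.toRingHom V (b • v) by
        show Submodule.Quotient.mk ((b : A) • ((1 : A) ⊗ₜ[ℤ] v)) = Submodule.Quotient.mk _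
        rw [TensorProduct.smul_tmul']
        rw [Submodule.Quotient.eq]
        exact Submodule.subset_span ⟨1, b, v, by simp⟩]

/-- The canonical `B`-linear map `γ : V ⊗_k Hom_A(V↑^A, N) → N↓_B` given by
`γ(v ⊗ f) = f(1 ⊗ v)`, where `B` acts only on the left tensor factor. -/
def gammaMap : (V ⊗[k] ((Ind B.val.toRingHom V) →ₗ[A] N)) →ₗ[↥B] N :=
  TensorProduct.AlgebraTensorModule.lift (gammaAux k A B V N)

theorem gammaMap_tmul (v : V) (f : (Ind B.val.toRingHom V) →ₗ[A] N) :
    gammaMap k A B V N (v ⊗ₜ[k] f) = f (Ind.of B.val.toRingHom V v) := rfl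

end Gamma

section IndLift

variable {A : Type*} [Ring A] {R : Type*} [Ring R] (f : R →+* A)
variable {V : Type*} [AddCommGroup V] [Module R V]
variable {N : Type*} [AddCommGroup N] [Module A N]

/-- The bilinear map `(a, v) ↦ a • g v` underlying the extension of `g` to the induced module. -/
def indLiftAux (g : V →+ N) : A →ₗ[A] (V →ₗ[ℤ] N) where
  toFun a :=
    { toFun := fun v => a • g v
      map_add' := fun v w => by rw [map_add, smul_add]
      map_smul' := fun c v => by rw [map_zsmul, smul_comm]; rfl }
  map_add' a b := by ext v; exact add_smul _ _ _
  map_smul' a b := by ext v; exact mul_smul _ _ _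

/-- The `A`-linear extension `a ⊗ v ↦ a • g v` to the induced module of an additive map `g : V → N`
that is linear over `R`, where `R` acts on `N` through `f`. -/
def indLift (g : V →+ N) (hg : ∀ (b : R) (v : V), g (b • v) = f b • g v) :
    Ind f V →ₗ[A] N :=
  Submodule.liftQ (indRel f V) (TensorProduct.AlgebraTensorModule.lift (indLiftAux g)) (by
    rw [indRel, Submodule.span_le]
    rintro x ⟨s, b, v, rfl⟩
    rw [SetLike.mem_coe, LinearMap.mem_ker, map_sub]
    change (s * f b) • g v - s • g (b • v) = 0
    rw [hg, mul_smul, sub_self])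

theorem indLift_of (g : V →+ N) (hg : ∀ (b : R) (v : V), g (b • v) = f b • g v) (v : V) :
    indLift f g hg (Ind.of f V v) = g v :=
  one_smul A (g v)

/-- The elements `1 ⊗ v` generate the induced module over `A`. -/
theorem ind_hom_ext {p q : Ind f V →ₗ[A] N} (h : ∀ v, p (Ind.of f V v) = q (Ind.of f V v)) :
    p = q := by
  refine LinearMap.ext fun x => ?_
  obtain ⟨t, rfl⟩ := Submodule.mkQ_surjective (indRel f V) x
  induction t using TensorProduct.induction_on with
  | zero => exact (map_zero p).trans (map_zero q).symm
  | tmul a v =>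
    have hx : (indRel f V).mkQ (a ⊗ₜ[ℤ] v) = a • (indRel f V).mkQ ((1 : A) ⊗ₜ[ℤ] v) := by
      rw [← map_smul, TensorProduct.smul_tmul', smul_eq_mul, mul_one]
    rw [hx]
    exact (p.map_smul a (Ind.of f V v)).trans
      ((congrArg (a • ·) (h v)).trans (q.map_smul a (Ind.of f V v)).symm)
  | add t u ht hu =>
    rw [map_add]
    exact (p.map_add _ _).trans ((congrArg₂ (· + ·) ht hu).trans (q.map_add _ _).symm)

end IndLift

/-- Let `k` be algebraically closed, `B ⊆ A` algebras over `k`,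
`V` a finite-dimensional simple `B`-module, `M = V↑^A = A ⊗_B V`, and `N` a
finite-dimensional `A`-module with `N↓_B ≅ V^{⊕n}`.  Then the `B`-linear map
`γ : V ⊗_k Hom_A(M,N) → N↓_B`, `γ(v ⊗ f) = f(1 ⊗ v)` (with `B` acting only on
the left tensor factor) is an isomorphism. -/
theorem stmt_4 (k : Type*) [Field k] [IsAlgClosed k]
    (A : Type*) [Ring A] [Algebra k A] (B : Subalgebra k A)
    (V : Type*) [AddCommGroup V] [Module k V] [Module ↥B V] [IsScalarTower k ↥B V]
    [FiniteDimensional k V] [IsSimpleModule ↥B V]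
    (N : Type*) [AddCommGroup N] [Module A N] [Module k N] [IsScalarTower k A N]
    [FiniteDimensional k N]
    (n : ℕ) (hres : Nonempty (N ≃ₗ[↥B] (Fin n → V))) :
    Function.Bijective (gammaMap k A B V N) := by
  classical
  obtain ⟨e⟩ := hres
  let ι (i : Fin n) : V →ₗ[↥B] N := e.symm.toLinearMap ∘ₗ LinearMap.single ↥B (fun _ => V) i
  let f (i : Fin n) : Ind B.val.toRingHom V →ₗ[A] N :=
    indLift B.val.toRingHom (ι i).toAddMonoidHom (fun b v => (ι i).map_smul b v)
  have hf (i : Fin n) (v : V) : f i (Ind.of B.val.toRingHom V v) = ι i v :=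
    indLift_of B.val.toRingHom (ι i).toAddMonoidHom (fun b v => (ι i).map_smul b v) v
  have hsum (w : Fin n → V) : ∑ i, ι i (w i) = e.symm w := by
    change ∑ i, e.symm (Pi.single i (w i)) = _
    rw [← map_sum, Finset.univ_sum_single]
  have hγ (w : Fin n → V) : gammaMap k A B V N (∑ i, w i ⊗ₜ[k] f i) = e.symm w := by
    rw [map_sum, ← hsum]
    exact Finset.sum_congr rfl fun i _ => hf i (w i)
  -- By Schur's lemma the coordinates of a `B`-linear map `V → V^n` are scalars.
  have hspan (p : Ind B.val.toRingHom V →ₗ[A] N) : ∃ c : Fin n → k, p = ∑ i, c i • f i := by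
    let g : V →ₗ[↥B] N :=
      { toFun := fun v => p (Ind.of B.val.toRingHom V v)
        map_add' := fun v w => LinearMap.congr_fun ((gammaAux k A B V N).map_add v w) p
        map_smul' := fun b v => LinearMap.congr_fun ((gammaAux k A B V N).map_smul b v) p }
    have hc (i : Fin n) : ∃ c : k, ∀ v, e (g v) i = c • v := by
      obtain ⟨c, hc⟩ := (IsSimpleModule.algebraMap_end_bijective_of_isAlgClosed k).2
        ((LinearMap.proj i ∘ₗ e.toLinearMap ∘ₗ g : V →ₗ[↥B] V))
      exact ⟨c, fun v => (LinearMap.congr_fun hc v).symm⟩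
    choose c hc using hc
    refine ⟨c, ind_hom_ext _ fun v => ?_⟩
    rw [LinearMap.sum_apply]
    have h1 : p (Ind.of B.val.toRingHom V v) = e.symm (fun i => c i • v) := by
      rw [LinearEquiv.eq_symm_apply]
      exact funext fun i => hc i v
    rw [h1, ← hsum]
    refine Finset.sum_congr rfl fun i _ => ?_
    rw [LinearMap.smul_apply, hf, ← algebraMap_smul ↥B (c i) v, map_smul, algebraMap_smul]
  have hzero : ∑ i, (0 : Fin n → V) i ⊗ₜ[k] f i = 0 :=
    Finset.sum_eq_zero fun i _ => TensorProduct.zero_tmul _ _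
  have hform (t : V ⊗[k] (Ind B.val.toRingHom V →ₗ[A] N)) :
      ∃ w : Fin n → V, t = ∑ i, w i ⊗ₜ[k] f i := by
    induction t using TensorProduct.induction_on with
    | zero => exact ⟨0, hzero.symm⟩
    | tmul v p =>
      obtain ⟨c, rfl⟩ := hspan p
      refine ⟨fun i => c i • v, ?_⟩
      rw [TensorProduct.tmul_sum]
      exact Finset.sum_congr rfl fun i _ => (TensorProduct.smul_tmul _ _ _).symm
    | add t u ht hu =>
      obtain ⟨w, rfl⟩ := ht
      obtain ⟨w', rfl⟩ := hu
      refine ⟨w + w', ?_⟩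
      rw [← Finset.sum_add_distrib]
      exact Finset.sum_congr rfl fun i _ => (TensorProduct.add_tmul _ _ _).symm
  constructor
  · refine (injective_iff_map_eq_zero _).2 fun t ht => ?_
    obtain ⟨w, rfl⟩ := hform t
    rw [hγ, LinearEquiv.map_eq_zero_iff] at ht
    subst ht
    exact hzero
  · exact fun x => ⟨∑ i, e x i ⊗ₜ[k] f i, (hγ (e x)).trans (e.symm_apply_apply x)⟩
end
end

section
/- Let k be an algebraically closed field, B ⊂ A algebras over k, V a finite-dimensional simple A-stable B-module, M = V↑^A, and E = End_A(M)^op. A finite-dimensional A-module N is static with respect to M (i.e., the A-module map φ : M ⊗_E Hom_A(M,N) → N, φ(m ⊗ f) = f(m), is an isomorphism) if and only if the restriction N↓_B is isomorphic to a direct sum of copies of V. -/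
/-! Write `M = V↑` and `U = Hom_A(M,N)`.

If `φ : M ⊗_E U → N` is surjective, then `N` is a sum of images of `A`-maps `M → N`. Since
`M↓_B ≅ Vⁿ`, it is a sum of images of `B`-maps `V → N` (`range_le_isotypic`), so `N` equals its
`V`-isotypic component, and finite-dimensionality gives `N↓_B ≅ Vᵐ`.

Conversely let `N↓_B ≅ Vᵐ` with inclusions `ι j : V → N`. By Frobenius reciprocity (`indExt`) each
`ι j` extends to `ι̂ j ∈ U`, and `T v = ∑ j, (1 ⊗ v j) ⊗ ι̂ j` defines an additive map
`T : Vᵐ → M ⊗_E U` for which `φ ∘ T` is the given isomorphism `Vᵐ ≅ N`. So it suffices that `T` is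
surjective. Stability writes any `m ∈ M` as a sum of `s (1 ⊗ w)` with `s ∈ End_A M`, and
`s (1 ⊗ w) ⊗ u = (1 ⊗ w) ⊗ (u ∘ s)` (`mk_balanced`); so only the elements `(1 ⊗ w) ⊗ g` matter.
Decomposing `g = ∑ j, ι̂ j ∘ d̂ j`, where `d̂ j ∈ End_A M` extends an endomorphism `d j` of `V`,
balancing in the other direction gives `(1 ⊗ w) ⊗ g = ∑ j, (1 ⊗ d j w) ⊗ ι̂ j`, a value of `T`. -/

open TensorProduct Pointwise MulOpposite

set_option synthInstance.maxHeartbeats 1000000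
set_option maxHeartbeats 2000000

noncomputable section

/-! ### Induced modules -/

/-- Universal property of `V↑ = A ⊗_B V`: a `B`-semilinear additive map `V → X` into an `A`-module
extends to an `A`-linear map `V↑ → X`. -/
theorem indLift_exists {A B V X : Type*} [Ring A] [Ring B] (f : B →+* A)
    [AddCommGroup V] [Module B V] [AddCommGroup X] [Module A X]
    (g : V →+ X) (hg : ∀ (b : B) (v : V), g (b • v) = f b • g v) :
    ∃ h : Ind f V →ₗ[A] X, ∀ v, h (Ind.of f V v) = g v := by
  let e : A →ₗ[A] (V →ₗ[ℤ] X) :=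
    { toFun := fun a => (a • g : V →+ X).toIntLinearMap
      map_add' := fun a b => by ext v; exact add_smul a b (g v)
      map_smul' := fun a b => by ext v; exact mul_smul a b (g v) }
  refine ⟨Submodule.liftQ _ (TensorProduct.AlgebraTensorModule.lift e) ?_, fun v => ?_⟩
  · rw [indRel, Submodule.span_le]
    rintro x ⟨s, b, v, rfl⟩
    have h1 : (TensorProduct.AlgebraTensorModule.lift e) ((s * f b) ⊗ₜ[ℤ] v)
        = (s * f b) • g v := rfl
    have h2 : (TensorProduct.AlgebraTensorModule.lift e) (s ⊗ₜ[ℤ] (b • v))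
        = s • g (b • v) := rfl
    rw [SetLike.mem_coe, LinearMap.mem_ker, map_sub, h1, h2, hg, mul_smul, sub_self]
  · exact one_smul A (g v)

/-- `V↑` is generated over `A` by the image of `V`, so `A`-linear maps out of it are determined
on `V`. -/
theorem ind_hom_ext_s6 {A B V X : Type*} [Ring A] [Ring B] (f : B →+* A)
    [AddCommGroup V] [Module B V] [AddCommGroup X] [Module A X]
    {g h : Ind f V →ₗ[A] X} (H : ∀ v, g (Ind.of f V v) = h (Ind.of f V v)) : g = h := by
  ext x
  obtain ⟨t, rfl⟩ := Submodule.Quotient.mk_surjective _ x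
  induction t using TensorProduct.induction_on with
  | zero => exact (map_zero g).trans (map_zero h).symm
  | tmul a v =>
    have key : (Submodule.Quotient.mk (a ⊗ₜ[ℤ] v) : Ind f V) = a • Ind.of f V v := by
      change _ = (Submodule.Quotient.mk (a • ((1 : A) ⊗ₜ[ℤ] v)) : Ind f V)
      rw [TensorProduct.smul_tmul', smul_eq_mul, mul_one]
    erw [key, map_smul, map_smul, H]
  | add x y hx hy =>
    exact (map_add g _ _).trans ((congrArg₂ (· + ·) hx hy).trans (map_add h _ _).symm)

/-- The canonical map `V → V↑` as an additive map. -/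
def indOfHom {A B V : Type*} [Ring A] [Ring B] (f : B →+* A)
    [AddCommGroup V] [Module B V] : V →+ Ind f V where
  toFun := Ind.of f V
  map_zero' := congrArg (Submodule.Quotient.mk (p := indRel f V)) (TensorProduct.tmul_zero V (1 : A))
  map_add' x y := congrArg (Submodule.Quotient.mk (p := indRel f V))
    (TensorProduct.tmul_add (1 : A) x y)

theorem indOf_smul {A B V : Type*} [Ring A] [Ring B] (f : B →+* A)
    [AddCommGroup V] [Module B V] (b : B) (v : V) :
    Ind.of f V (b • v) = f b • Ind.of f V v := by
  symm
  change (Submodule.Quotient.mk (f b • ((1 : A) ⊗ₜ[ℤ] v)) : (A ⊗[ℤ] V) ⧸ indRel f V)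
    = Submodule.Quotient.mk ((1 : A) ⊗ₜ[ℤ] (b • v))
  rw [Submodule.Quotient.eq, TensorProduct.smul_tmul', smul_eq_mul, mul_one]
  exact Submodule.subset_span ⟨1, b, v, by rw [one_mul]⟩

/-! ### Frobenius reciprocity for a subalgebra -/

section Restriction

variable {k : Type*} [Field k] {A : Type*} [Ring A] [Algebra k A] (B : Subalgebra k A)
  {V : Type*} [AddCommGroup V] [Module ↥B V]

/-- Frobenius reciprocity: a `B`-linear map `V → X↓_B` extends to an `A`-linear map `V↑ → X`. -/
def indExt {X : Type*} [AddCommGroup X] [Module A X] (g : V →ₗ[↥B] X) :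
    Ind B.val.toRingHom V →ₗ[A] X :=
  (indLift_exists B.val.toRingHom g.toAddMonoidHom (fun b v => g.map_smul b v)).choose

theorem indExt_of {X : Type*} [AddCommGroup X] [Module A X] (g : V →ₗ[↥B] X) (v : V) :
    indExt B g (Ind.of B.val.toRingHom V v) = g v :=
  (indLift_exists B.val.toRingHom g.toAddMonoidHom (fun b v => g.map_smul b v)).choose_spec v

/-- The canonical map `V → V↑` as a `B`-linear map. -/
def indOfLin : V →ₗ[↥B] Ind B.val.toRingHom V where
  toFun := Ind.of B.val.toRingHom V
  map_add' := (indOfHom B.val.toRingHom).map_add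
  map_smul' := indOf_smul B.val.toRingHom

/-- The restriction to `B` of an `A`-linear map. -/
def resB {X Y : Type*} [AddCommGroup X] [Module A X] [AddCommGroup Y] [Module A Y]
    (f : X →ₗ[A] Y) : X →ₗ[↥B] Y where
  toFun := f
  map_add' := f.map_add
  map_smul' b x := f.map_smul (b : A) x

end Restriction

/-! ### Isotypic modules -/

/-- A homomorphism from a simple module `V` lands in the `V`-isotypic component. -/
theorem range_le_isotypic {R V X : Type*} [Ring R] [AddCommGroup V] [Module R V]
    [IsSimpleModule R V] [AddCommGroup X] [Module R X] (g : V →ₗ[R] X) :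
    LinearMap.range g ≤ isotypicComponent R X V := by
  rcases LinearMap.injective_or_eq_zero g with h | h
  · exact le_sSup ⟨(LinearEquiv.ofInjective g h).symm⟩
  · rw [h, LinearMap.range_zero]
    exact bot_le

/-- Given `e : X ≃ Vⁿ`, every element of `X` is a sum of values of homomorphisms `V → X`. -/
theorem eq_sum_single {R V X : Type*} [Ring R] [AddCommGroup V] [Module R V]
    [AddCommGroup X] [Module R X] {n : ℕ} (e : X ≃ₗ[R] (Fin n → V)) (x : X) :
    x = ∑ i, (e.symm.toLinearMap ∘ₗ LinearMap.single R (fun _ => V) i) (e x i) := by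
  apply e.injective
  simp [map_sum, Finset.univ_sum_single]

/-! ### The balanced tensor product `M ⊗_E Hom_A(M,N)` -/

section Balanced

variable {A M N : Type*} [Ring A] [AddCommGroup M] [Module A M] [AddCommGroup N] [Module A N]

theorem mk_add_left (m m' : M) (u : M →ₗ[A] N) :
    BalT.mk (Module.End A M) A M (M →ₗ[A] N) (m + m') u =
      BalT.mk _ _ _ _ m u + BalT.mk _ _ _ _ m' u :=
  congrArg (balRel (Module.End A M) A M (M →ₗ[A] N)).mkQ (TensorProduct.add_tmul m m' u)

theorem mk_add_right (m : M) (u u' : M →ₗ[A] N) :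
    BalT.mk (Module.End A M) A M (M →ₗ[A] N) m (u + u') =
      BalT.mk _ _ _ _ m u + BalT.mk _ _ _ _ m u' :=
  congrArg (balRel (Module.End A M) A M (M →ₗ[A] N)).mkQ (TensorProduct.tmul_add m u u')

/-- The balancing relation, moving an endomorphism across the tensor sign. -/
theorem mk_balanced (s : Module.End A M) (m : M) (u : M →ₗ[A] N) :
    BalT.mk (Module.End A M) A M (M →ₗ[A] N) (s m) u = BalT.mk _ _ _ _ m (u ∘ₗ s) :=
  (Submodule.Quotient.eq _).2 (Submodule.subset_span ⟨s, m, u, rfl⟩)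

/-- `m ↦ m ⊗ u` as an additive map into the balanced tensor product. -/
def mkLeft (u : M →ₗ[A] N) : M →+ BalT (Module.End A M) A M (M →ₗ[A] N) :=
  AddMonoidHom.mk' (fun m => BalT.mk _ _ _ _ m u) (fun m m' => mk_add_left m m' u)

/-- `u ↦ m ⊗ u` as an additive map into the balanced tensor product. -/
def mkRight (m : M) : (M →ₗ[A] N) →+ BalT (Module.End A M) A M (M →ₗ[A] N) :=
  AddMonoidHom.mk' (fun u => BalT.mk _ _ _ _ m u) (fun u u' => mk_add_right m u u')

theorem balT_induction {p : BalT (Module.End A M) A M (M →ₗ[A] N) → Prop}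
    (h0 : p 0) (hmk : ∀ m u, p (BalT.mk _ _ _ _ m u)) (hadd : ∀ x y, p x → p y → p (x + y))
    (x) : p x := by
  obtain ⟨t, rfl⟩ := Submodule.Quotient.mk_surjective _ x
  induction t using TensorProduct.induction_on with
  | zero => exact h0
  | tmul m u => exact hmk m u
  | add x y hx hy => exact hadd _ _ hx hy

end Balanced

/-- Let `k` be algebraically closed, `B ⊆ A` algebras over `k`,
`V` a finite-dimensional simple `A`-stable `B`-module, `M = V↑^A`,
`E = End_A(M)ᵒᵖ`.  A finite-dimensional `A`-module `N` is static with respect to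
`M` (the canonical map `φ : M ⊗_E Hom_A(M,N) → N` is an isomorphism) iff `N↓_B`
is isomorphic to a direct sum of copies of `V`. -/
theorem stmt_6 (k : Type*) [Field k] [IsAlgClosed k]
    (A : Type*) [Ring A] [Algebra k A] (B : Subalgebra k A)
    (V : Type*) [AddCommGroup V] [Module k V] [Module ↥B V] [IsScalarTower k ↥B V]
    [FiniteDimensional k V] [IsSimpleModule ↥B V]
    (hstable : ∃ n : ℕ, Nonempty ((Ind B.val.toRingHom V) ≃ₗ[↥B] (Fin n → V)))
    (N : Type*) [AddCommGroup N] [Module A N] [Module k N] [IsScalarTower k A N]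
    [FiniteDimensional k N] :
    Function.Bijective (phiMap A (Ind B.val.toRingHom V) N) ↔
      ∃ n : ℕ, Nonempty (N ≃ₗ[↥B] (Fin n → V)) := by
  constructor
  · rintro ⟨-, hsurj⟩
    obtain ⟨n, ⟨e⟩⟩ := hstable
    have htop : isotypicComponent ↥B N V = ⊤ := by
      rw [eq_top_iff]
      rintro x -
      obtain ⟨t, rfl⟩ := hsurj x
      induction t using balT_induction with
      | h0 => rw [map_zero]; exact zero_mem _
      | hadd x y hx hy => rw [map_add]; exact add_mem hx hy
      | hmk m u =>
        -- As a `B`-module `M ≅ Vⁿ`, so `u m` is a sum of values of `B`-linear maps `V → N`.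
        rw [phiMap_mk, eq_sum_single e m, map_sum]
        refine sum_mem fun i _ => range_le_isotypic
          (resB B u ∘ₗ (e.symm.toLinearMap ∘ₗ LinearMap.single ↥B (fun _ => V) i)) ⟨e m i, rfl⟩
    have hss : IsSemisimpleModule ↥B N := by
      have : IsSemisimpleModule ↥B (⊤ : Submodule ↥B N) := htop ▸ inferInstance
      exact IsSemisimpleModule.congr Submodule.topEquiv.symm
    have hiso : IsIsotypicOfType ↥B N V := by
      have := IsIsotypicOfType.isotypicComponent ↥B N V
      rw [htop] at this
      exact Submodule.topEquiv.isIsotypicOfType_iff.1 this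
    have : Module.Finite ↥B N := Module.Finite.of_restrictScalars_finite k ↥B N
    exact hiso.linearEquiv_fun
  · rintro ⟨m, ⟨θ⟩⟩
    obtain ⟨n, ⟨e⟩⟩ := hstable
    let ι : Fin m → (V →ₗ[↥B] N) := fun j =>
      θ.symm.toLinearMap ∘ₗ LinearMap.single ↥B (fun _ => V) j
    -- `T` is the map `Vᵐ → M ⊗_E Hom_A(M,N)`, `v ↦ ∑ j, (1 ⊗ v j) ⊗ ι̂ j`, where `ι̂ j : M → N`
    -- extends the `j`-th inclusion `ι j` of `V` into `N ≅ Vᵐ`.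
    let T : (Fin m → V) →+ BalT (Module.End A (Ind B.val.toRingHom V)) A
        (Ind B.val.toRingHom V) (Ind B.val.toRingHom V →ₗ[A] N) :=
      ∑ j, ((mkLeft (indExt B (ι j))).comp (indOfLin B).toAddMonoidHom).comp
        (Pi.evalAddMonoidHom (fun _ => V) j)
    have hT (v : Fin m → V) :
        T v = ∑ j, BalT.mk _ _ _ _ (Ind.of B.val.toRingHom V (v j)) (indExt B (ι j)) := by
      simp only [T, AddMonoidHom.finsetSum_apply]
      rfl
    have hφT (v : Fin m → V) : phiMap A (Ind B.val.toRingHom V) N (T v) = θ.symm v := by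
      rw [hT, map_sum]
      simp only [phiMap_mk, indExt_of]
      have := eq_sum_single θ (θ.symm v)
      rw [LinearEquiv.apply_symm_apply] at this
      exact this.symm
    have hgen (v : V) (g : Ind B.val.toRingHom V →ₗ[A] N) :
        BalT.mk _ _ _ _ (Ind.of B.val.toRingHom V v) g ∈ T.range := by
      -- The components `d j` of `g` restricted to `V` lie in `End_B V`; they extend to
      -- endomorphisms of `M`, which can be moved to the left across the tensor sign.
      let d : Fin m → (V →ₗ[↥B] V) := fun j =>
        LinearMap.proj j ∘ₗ θ.toLinearMap ∘ₗ resB B g ∘ₗ indOfLin B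
      have hg : g = ∑ j, indExt B (ι j) ∘ₗ indExt B (indOfLin B ∘ₗ d j) := by
        refine ind_hom_ext_s6 _ fun w => ?_
        rw [LinearMap.sum_apply, eq_sum_single θ (g _)]
        refine Finset.sum_congr rfl fun j _ => ?_
        rw [LinearMap.comp_apply (indExt B (ι j)), indExt_of]
        exact (indExt_of B (ι j) (d j w)).symm
      refine ⟨fun j => d j v, ?_⟩
      rw [hT]
      conv_rhs => rw [hg]
      refine Eq.trans ?_ (map_sum (mkRight (Ind.of B.val.toRingHom V v)) _ _).symm
      refine Finset.sum_congr rfl fun j _ => ?_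
      refine Eq.trans ?_ (mk_balanced _ _ _)
      rw [indExt_of]
      rfl
    have hTs : Function.Surjective T := by
      intro x
      change x ∈ T.range
      induction x using balT_induction with
      | h0 => exact zero_mem _
      | hadd x y hx hy => exact add_mem hx hy
      | hmk x u =>
        -- Stability writes `x` as a sum of `s (1 ⊗ w)` with `s ∈ End_A M`, and each `s` moves to
        -- the right factor, which leaves the case treated in `hgen`.
        rw [eq_sum_single e x]
        have := map_sum (mkLeft u) (fun i =>
          (e.symm.toLinearMap ∘ₗ LinearMap.single ↥B (fun _ => V) i) (e x i)) Finset.univ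
        refine (this.symm ▸ sum_mem fun i _ => ?_ : mkLeft u _ ∈ T.range)
        rw [← indExt_of B (e.symm.toLinearMap ∘ₗ LinearMap.single ↥B (fun _ => V) i)]
        have h2 := mk_balanced (indExt B (e.symm.toLinearMap ∘ₗ LinearMap.single ↥B (fun _ => V) i))
          (Ind.of B.val.toRingHom V (e x i)) u
        exact (congrArg (· ∈ T.range) h2).mpr (hgen _ _)
    have hcomp : Function.Bijective (phiMap A (Ind B.val.toRingHom V) N ∘ T) := by
      rw [show phiMap A (Ind B.val.toRingHom V) N ∘ T = θ.symm from funext hφT]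
      exact θ.symm.bijective
    exact ⟨hcomp.1.of_comp_right hTs, hcomp.2.of_comp⟩
end
end

section
/- Let k be an algebraically closed field, B ⊂ A algebras over k, V a finite-dimensional simple A-stable B-module, and E = End_A(V↑^A)^op. The functor U ↦ V↑^A ⊗_E U induces a bijection between isomorphism classes of finite-dimensional left E-modules and isomorphism classes of finite-dimensional A-modules whose restriction to B is a direct sum of copies of V, with inverse induced by N ↦ Hom_A(V↑^A, N). -/
/-!
Write `M = V↑^A` and `F(N) = Hom_A(M, N)`, which is `Hom_B(V, N)` by Frobenius reciprocity
(`Ind.lift`, `Ind.hom_ext`).  Since `k` is algebraically closed, `End_B(V) = k`, so for `N ≅ Vⁿ`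
over `B` every `B`-linear map `V → N` is a `k`-combination of the coordinate inclusions
(`schur_expand`).

The key point is that stability of `V` makes `M` isomorphic to `V ⊗_k E` as a `(B, E)`-bimodule.
This appears here as the statement that, for every `E`-module `U`, the map
`θ : V ⊗_k U → M ⊗_E U`, `v ⊗ u ↦ (1 ⊗ v) ⊗ u`, is bijective (`theta_bijective`).  With
`M ≅ Vⁿ` and `εᵢ ∈ E` extending the `i`-th inclusion `V → M`, its inverse is
`m ⊗ u ↦ ∑ i, mᵢ ⊗ εᵢ u`, and Schur's lemma shows that this formula is `E`-balanced.

Everything follows from `θ`.  A `k`-basis of `U` gives `M ⊗_E U ≅ V ⊗_k U ≅ V^d` over `B`.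
The unit `ψ` becomes `U → Hom_B(V, V ⊗_k U)`, bijective by Schur's lemma.  The counit `φ`, composed
with `θ` for `U = F(N)`, becomes the evaluation `V ⊗_k Hom_B(V, N) → N`, again bijective when
`N ≅ V^m`.
-/

open TensorProduct Pointwise MulOpposite

set_option synthInstance.maxHeartbeats 1000000
set_option maxHeartbeats 2000000

noncomputable section

universe u

/-! ### The balanced tensor product -/

section BalLemmas

variable {S : Type*} [Ring S] {Amb : Type*} [Ring Amb]
variable {M U : Type*} [AddCommGroup M] [AddCommGroup U]
variable [Module S M] [Module Amb M] [Module Sᵐᵒᵖ U]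

theorem BalT.mk_add_left (m m' : M) (u : U) :
    BalT.mk S Amb M U (m + m') u = BalT.mk S Amb M U m u + BalT.mk S Amb M U m' u :=
  congrArg (Submodule.Quotient.mk (p := balRel S Amb M U)) (TensorProduct.add_tmul m m' u)

theorem BalT.mk_add_right (m : M) (u u' : U) :
    BalT.mk S Amb M U m (u + u') = BalT.mk S Amb M U m u + BalT.mk S Amb M U m u' :=
  congrArg (Submodule.Quotient.mk (p := balRel S Amb M U)) (TensorProduct.tmul_add m u u')

theorem BalT.mk_smul_left (a : Amb) (m : M) (u : U) :
    BalT.mk S Amb M U (a • m) u = a • BalT.mk S Amb M U m u := rfl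

theorem BalT.mk_balanced (s : S) (m : M) (u : U) :
    BalT.mk S Amb M U (s • m) u = BalT.mk S Amb M U m (MulOpposite.op s • u) :=
  (Submodule.Quotient.eq _).2 (Submodule.subset_span ⟨s, m, u, rfl⟩)

theorem BalT.induction {p : BalT S Amb M U → Prop} (x : BalT S Amb M U)
    (h0 : p 0) (hmk : ∀ m u, p (BalT.mk S Amb M U m u))
    (hadd : ∀ x y, p x → p y → p (x + y)) : p x := by
  obtain ⟨t, rfl⟩ := Submodule.Quotient.mk_surjective (balRel S Amb M U) x
  induction t with
  | zero => exact h0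
  | tmul m u => exact hmk m u
  | add x y hx hy => exact hadd _ _ hx hy

/-- The additive map out of `M ⊗_{Sᵐᵒᵖ} U` given by a balanced biadditive map.  As the actions of
`S` and `Amb` on `M` commute, the `Amb`-span of the relations is their additive span, so nothing
has to be assumed about `Amb` on the target. -/
def BalT.lift [SMulCommClass S Amb M] {P : Type*} [AddCommGroup P]
    (g : M ⊗[ℤ] U →ₗ[ℤ] P)
    (hg : ∀ (s : S) (m : M) (u : U), g ((s • m) ⊗ₜ u) = g (m ⊗ₜ (MulOpposite.op s • u))) :
    BalT S Amb M U →ₗ[ℤ] P :=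
  ((balRel S Amb M U).restrictScalars ℤ).liftQ g (by
    intro x hx
    have key : ∀ a : Amb, g (a • x) = 0 := by
      refine Submodule.span_induction (p := fun x _ => ∀ a : Amb, g (a • x) = 0)
        ?_ ?_ ?_ ?_ (show x ∈ balRel S Amb M U from hx)
      · rintro x ⟨s, m, u, rfl⟩ a
        rw [smul_sub, TensorProduct.smul_tmul', TensorProduct.smul_tmul', ← smul_comm s a m,
          map_sub, hg, sub_self]
      · intro a; simp
      · intro x y _ _ hx hy a
        rw [smul_add, map_add, hx, hy, add_zero]
      · intro b x _ hx a
        rw [smul_smul, hx]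
    have h1 := key 1
    rw [one_smul] at h1
    exact h1) ∘ₗ (Submodule.Quotient.restrictScalarsEquiv ℤ (balRel S Amb M U)).symm.toLinearMap

theorem BalT.lift_mk [SMulCommClass S Amb M] {P : Type*} [AddCommGroup P]
    (g : M ⊗[ℤ] U →ₗ[ℤ] P)
    (hg : ∀ (s : S) (m : M) (u : U), g ((s • m) ⊗ₜ u) = g (m ⊗ₜ (MulOpposite.op s • u)))
    (m : M) (u : U) : BalT.lift (Amb := Amb) g hg (BalT.mk S Amb M U m u) = g (m ⊗ₜ u) := rfl

end BalLemmas

/-! ### Frobenius reciprocity -/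

section IndLemmas

variable {k : Type*} [Field k] {A : Type*} [Ring A] [Algebra k A] {B : Subalgebra k A}
variable {V : Type*} [AddCommGroup V] [Module ↥B V]

/-- The induced module `V↑^A = A ⊗_B V` for a subalgebra `B` of `A`. -/
abbrev IndSub (B : Subalgebra k A) (V : Type*) [AddCommGroup V] [Module ↥B V] :=
  Ind B.val.toRingHom V

theorem Ind.of_add (v w : V) :
    Ind.of B.val.toRingHom V (v + w) =
      Ind.of B.val.toRingHom V v + Ind.of B.val.toRingHom V w :=
  congrArg (Submodule.Quotient.mk (p := indRel B.val.toRingHom V))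
    (TensorProduct.tmul_add 1 v w)

theorem Ind.of_smul (b : ↥B) (v : V) :
    Ind.of B.val.toRingHom V (b • v) =
      (b : A) • Ind.of B.val.toRingHom V v := by
  symm
  change Submodule.Quotient.mk (p := indRel B.val.toRingHom V) ((b : A) • ((1 : A) ⊗ₜ[ℤ] v)) =
    Submodule.Quotient.mk ((1 : A) ⊗ₜ[ℤ] (b • v))
  refine (Submodule.Quotient.eq _).2 (Submodule.subset_span ⟨1, b, v, ?_⟩)
  rw [TensorProduct.smul_tmul', smul_eq_mul, mul_one, one_mul]
  rfl

variable (B V) in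
/-- The unit `v ↦ 1 ⊗ v` of Frobenius reciprocity, as a `B`-linear map. -/
def Ind.unit : V →ₗ[↥B] IndSub B V where
  toFun := Ind.of _ V
  map_add' := Ind.of_add
  map_smul' := Ind.of_smul

theorem Ind.mk_eq (a : A) (v : V) :
    Ind.mk B.val.toRingHom V a v = a • Ind.unit B V v := by
  change _ = Submodule.Quotient.mk (a • ((1 : A) ⊗ₜ[ℤ] v))
  rw [TensorProduct.smul_tmul', smul_eq_mul, mul_one]
  rfl

theorem Ind.hom_ext {N : Type*} [AddCommGroup N] [Module A N] {f g : IndSub B V →ₗ[A] N}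
    (h : ∀ v : V, f (Ind.unit B V v) = g (Ind.unit B V v)) : f = g := by
  ext x
  obtain ⟨t, rfl⟩ := Submodule.Quotient.mk_surjective (indRel B.val.toRingHom V) x
  induction t with
  | zero => exact (map_zero f).trans (map_zero g).symm
  | tmul a v =>
    change f (Ind.mk _ V a v) = g (Ind.mk _ V a v)
    rw [Ind.mk_eq, map_smul, map_smul, h]
  | add x y hx hy => exact (map_add f _ _).trans ((congrArg₂ _ hx hy).trans (map_add g _ _).symm)

/-- Frobenius reciprocity: a `B`-linear map `V → N` extends to an `A`-linear map `V↑^A → N`.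
Linearity over `B` is spelled out, so that no choice of a `B`-module structure on `N` matters. -/
def Ind.lift {N : Type*} [AddCommGroup N] [Module A N] (g : V →+ N)
    (hg : ∀ (b : ↥B) (v : V), g (b • v) = (b : A) • g v) : IndSub B V →ₗ[A] N :=
  (indRel B.val.toRingHom V).liftQ
    (TensorProduct.AlgebraTensorModule.lift
      ((LinearMap.toSpanSingleton A (V →ₗ[ℤ] N) g.toIntLinearMap))) (by
    rw [indRel, Submodule.span_le]
    rintro x ⟨a, b, v, rfl⟩
    have : ((a * b : A) • g v) - a • g (b • v) = 0 := by
      rw [hg, mul_smul, sub_self]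
    simpa using this)

theorem Ind.lift_of {N : Type*} [AddCommGroup N] [Module A N] (g : V →+ N)
    (hg : ∀ (b : ↥B) (v : V), g (b • v) = (b : A) • g v) (v : V) :
    Ind.lift g hg (Ind.unit B V v) = g v :=
  one_smul A (g v)

end IndLemmas

/-! ### Schur's lemma -/

section Core

variable {k : Type*} [Field k] {A : Type*} [Ring A] [Algebra k A] {B : Subalgebra k A}
variable {V : Type*} [AddCommGroup V] [Module k V] [Module ↥B V] [IsScalarTower k ↥B V]

theorem Ind.unit_smul (c : k) (v : V) : Ind.unit B V (c • v) = c • Ind.unit B V v := by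
  have : IsScalarTower k ↥B (IndSub B V) := Subalgebra.isScalarTower_mid ..
  exact (Ind.unit B V).map_smul_of_tower c v

/-- Schur's lemma in coordinates: a `B`-linear map from `V` to `N ≅ Vⁿ` is a `k`-linear combination
of the `n` coordinate inclusions. -/
theorem schur_expand [IsAlgClosed k] [FiniteDimensional k V] [IsSimpleModule ↥B V]
    {N : Type*} [AddCommGroup N] [Module ↥B N] [Module k N] [IsScalarTower k ↥B N]
    {n : ℕ} (e : N ≃ₗ[↥B] (Fin n → V)) (h : V →ₗ[↥B] N) :
    ∃ c : Fin n → k, ∀ v, (∀ i, e (h v) i = c i • v) ∧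
      h v = ∑ i, c i • e.symm (Pi.single i v) := by
  have key : ∀ i, ∃ c : k, ∀ v, e (h v) i = c • v := by
    intro i
    obtain ⟨c, hc⟩ := (IsSimpleModule.algebraMap_end_bijective_of_isAlgClosed (A := ↥B) (V := V) k).2
      (LinearMap.proj i ∘ₗ e.toLinearMap ∘ₗ h)
    exact ⟨c, fun v => (LinearMap.congr_fun hc v).symm⟩
  choose c hc using key
  refine ⟨c, fun v => ⟨fun i => hc i v, ?_⟩⟩
  apply e.injective
  have hs : ∀ i, e (c i • e.symm (Pi.single i v)) = Pi.single i (c i • v) := by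
    intro i
    rw [← LinearEquiv.coe_toLinearMap, LinearMap.map_smul_of_tower, LinearEquiv.coe_toLinearMap,
      LinearEquiv.apply_symm_apply, ← Pi.single_smul]
  rw [map_sum, Finset.sum_congr rfl (fun i _ => hs i)]
  have := Finset.univ_sum_single (e (h v))
  rw [← this]
  exact Finset.sum_congr rfl fun i _ => by rw [hc]

/-- The isomorphism `V ⊗_k U ≅ V^d` of `B`-modules given by a `k`-basis of `U`. -/
def tensorEquivPi {U : Type*} [AddCommGroup U] [Module k U] {d : ℕ} (b : Module.Basis (Fin d) k U) :
    V ⊗[k] U ≃ₗ[↥B] (Fin d → V) :=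
  { TensorProduct.congr (LinearEquiv.refl k V) b.equivFun ≪≫ₗ
      TensorProduct.piScalarRight k k V (Fin d) with
    map_smul' := fun s t => by
      induction t with
      | zero => simp
      | tmul v u =>
        ext i
        simpa [TensorProduct.smul_tmul'] using smul_comm (b.repr u i) s v
      | add x y hx hy =>
        simp only [AddHom.toFun_eq_coe, LinearMap.coe_toAddHom, RingHom.id_apply] at hx hy ⊢
        rw [smul_add, map_add, hx, hy, map_add, smul_add] }

theorem tensorEquivPi_symm_single {U : Type*} [AddCommGroup U] [Module k U] {d : ℕ}
    (b : Module.Basis (Fin d) k U) (i : Fin d) (v : V) :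
    (tensorEquivPi (B := B) b).symm (Pi.single i v) = v ⊗ₜ b i := by
  change (TensorProduct.congr (LinearEquiv.refl k V) b.equivFun ≪≫ₗ
      TensorProduct.piScalarRight k k V (Fin d)).symm (Pi.single i v) = _
  simp

/-! ### The isomorphism `V ⊗_k U ≅ V↑^A ⊗_E U` and the unit -/

section Theta

variable {U : Type*} [AddCommGroup U] [Module (Module.End A (IndSub B V))ᵐᵒᵖ U] [Module k U]

theorem BalT.mk_smul_right
    (hU : ∀ (c : k) (e : (Module.End A (IndSub B V))ᵐᵒᵖ) (u : U), (c • e) • u = c • (e • u))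
    (c : k) (m : IndSub B V) (u : U) :
    BalT.mk (Module.End A (IndSub B V)) A (IndSub B V) U m (c • u) =
      c • BalT.mk (Module.End A (IndSub B V)) A (IndSub B V) U m u := by
  have h := hU c 1 u
  rw [one_smul] at h
  have h2 : c • (1 : (Module.End A (IndSub B V))ᵐᵒᵖ) =
    MulOpposite.op (c • (1 : Module.End A (IndSub B V))) := rfl
  rw [← h, h2, ← BalT.mk_balanced]
  rfl

/-- The comparison map `V ⊗_k U → V↑^A ⊗_E U`, `v ⊗ u ↦ (1 ⊗ v) ⊗ u`. -/
def theta (hU : ∀ (c : k) (e : (Module.End A (IndSub B V))ᵐᵒᵖ) (u : U), (c • e) • u = c • (e • u)) :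
    V ⊗[k] U →ₗ[k] BalT (Module.End A (IndSub B V)) A (IndSub B V) U :=
  TensorProduct.lift (LinearMap.mk₂ k
    (fun v u => BalT.mk (Module.End A (IndSub B V)) A (IndSub B V) U (Ind.unit B V v) u)
    (fun v w u => by rw [map_add, BalT.mk_add_left])
    (fun c v u => by rw [Ind.unit_smul]; rfl)
    (fun v u w => BalT.mk_add_right _ _ _)
    (fun c v u => BalT.mk_smul_right hU c _ u))

variable
  (hU : ∀ (c : k) (e : (Module.End A (IndSub B V))ᵐᵒᵖ) (u : U), (c • e) • u = c • (e • u))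

theorem theta_tmul (v : V) (u : U) :
    theta hU (v ⊗ₜ u) =
      BalT.mk (Module.End A (IndSub B V)) A (IndSub B V) U (Ind.unit B V v) u := rfl

variable {n : ℕ} (e : IndSub B V ≃ₗ[↥B] (Fin n → V))

/-- The endomorphism of `V↑^A` extending the `i`-th coordinate inclusion `V → Vⁿ ≅ V↑^A`. -/
def coordEnd (i : Fin n) : Module.End A (IndSub B V) :=
  Ind.lift (e.symm.toLinearMap ∘ₗ LinearMap.single ↥B (fun _ => V) i).toAddMonoidHom
    (LinearMap.map_smul (e.symm.toLinearMap ∘ₗ LinearMap.single ↥B (fun _ => V) i))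

theorem coordEnd_unit (i : Fin n) (v : V) :
    coordEnd e i (Ind.unit B V v) = e.symm (Pi.single i v) :=
  one_smul A (e.symm (Pi.single i v))

theorem sum_coordEnd (m : IndSub B V) : ∑ i, coordEnd e i (Ind.unit B V (e m i)) = m := by
  simp_rw [coordEnd_unit]
  rw [← map_sum, Finset.univ_sum_single, LinearEquiv.symm_apply_apply]

variable (k U) in
/-- The biadditive map `V↑^A × U → V ⊗_k U` inducing the inverse of `theta`:
`(m, u) ↦ ∑ i, mᵢ ⊗ εᵢ u`, where `mᵢ` are the coordinates of `m` in `V↑^A ≅ Vⁿ` and `εᵢ` are the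
endomorphisms `coordEnd e i`. -/
def thetaInvAux : IndSub B V ⊗[ℤ] U →ₗ[ℤ] V ⊗[k] U :=
  TensorProduct.lift (LinearMap.mk₂ ℤ
    (fun m u => ∑ i, (e m i) ⊗ₜ[k] (MulOpposite.op (coordEnd e i) • u))
    (fun m m' u => by simp [TensorProduct.add_tmul, Finset.sum_add_distrib])
    (fun c m u => by
      rw [Finset.smul_sum]
      refine Finset.sum_congr rfl fun i _ => ?_
      rw [map_zsmul, TensorProduct.smul_tmul', Pi.smul_apply])
    (fun m u w => by simp [TensorProduct.tmul_add, Finset.sum_add_distrib])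
    (fun c m u => by
      rw [Finset.smul_sum]
      refine Finset.sum_congr rfl fun i _ => ?_
      rw [smul_comm (MulOpposite.op (coordEnd e i)) c u, TensorProduct.tmul_smul]))

theorem thetaInvAux_tmul (m : IndSub B V) (u : U) :
    thetaInvAux k U e (m ⊗ₜ u) =
      ∑ i, (e m i) ⊗ₜ[k] (MulOpposite.op (coordEnd e i) • u) := rfl

variable [IsAlgClosed k] [FiniteDimensional k V] [IsSimpleModule ↥B V]

/-- Compatibility of the coordinate description with `E`: by Schur's lemma, `f (1 ⊗ v)` has
coordinates `cᵢ v`, and then `f = ∑ i, cᵢ εᵢ`. -/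
theorem thetaInvAux_hom
    (hU : ∀ (c : k) (e : (Module.End A (IndSub B V))ᵐᵒᵖ) (u : U), (c • e) • u = c • (e • u))
    (f : Module.End A (IndSub B V)) (v : V) (u : U) :
    thetaInvAux k U e (f (Ind.unit B V v) ⊗ₜ u) = v ⊗ₜ[k] (MulOpposite.op f • u) := by
  have : IsScalarTower k ↥B (IndSub B V) := Subalgebra.isScalarTower_mid ..
  obtain ⟨c, hc⟩ := schur_expand (k := k) e (f.restrictScalars ↥B ∘ₗ Ind.unit B V)
  have hf : f = ∑ i, c i • coordEnd e i := by
    refine Ind.hom_ext fun v => ?_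
    rw [LinearMap.sum_apply]
    refine (hc v).2.trans (Finset.sum_congr rfl fun i _ => ?_)
    rw [LinearMap.smul_apply, coordEnd_unit]
  have hop : MulOpposite.op f = ∑ i, c i • MulOpposite.op (coordEnd e i) := by
    rw [hf]
    exact map_sum (MulOpposite.opAddEquiv (α := Module.End A (IndSub B V))) _ _
  rw [thetaInvAux_tmul, hop, Finset.sum_smul, TensorProduct.tmul_sum]
  refine Finset.sum_congr rfl fun i _ => ?_
  rw [hU]
  exact (congrArg (· ⊗ₜ[k] (MulOpposite.op (coordEnd e i) • u)) ((hc v).1 i)).trans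
    (TensorProduct.smul_tmul (c i) v (MulOpposite.op (coordEnd e i) • u))

theorem thetaInvAux_balanced
    (hU : ∀ (c : k) (e : (Module.End A (IndSub B V))ᵐᵒᵖ) (u : U), (c • e) • u = c • (e • u))
    (s : Module.End A (IndSub B V)) (m : IndSub B V) (u : U) :
    thetaInvAux k U e ((s • m) ⊗ₜ u) = thetaInvAux k U e (m ⊗ₜ (MulOpposite.op s • u)) := by
  -- By additivity it is enough to treat `m = εⱼ (1 ⊗ v)`.
  rw [← sum_coordEnd e m, Finset.smul_sum, TensorProduct.sum_tmul, TensorProduct.sum_tmul, map_sum,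
    map_sum]
  refine Finset.sum_congr rfl fun j _ => ?_
  rw [thetaInvAux_hom e hU]
  refine (thetaInvAux_hom e hU (s * coordEnd e j) _ u).trans ?_
  rw [MulOpposite.op_mul, mul_smul]

/-- `V ⊗_k U → V↑^A ⊗_E U` is bijective: as a `(B, E)`-bimodule, `V↑^A` is `V ⊗_k E`. -/
theorem theta_bijective (e : IndSub B V ≃ₗ[↥B] (Fin n → V)) : Function.Bijective (theta hU) := by
  let σ := BalT.lift (Amb := A) (thetaInvAux k U e) (thetaInvAux_balanced e hU)
  have hσ : ∀ m u, σ (BalT.mk _ _ _ _ m u) = thetaInvAux k U e (m ⊗ₜ u) :=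
    fun m u => BalT.lift_mk _ _ m u
  refine Function.bijective_iff_has_inverse.2 ⟨σ, fun t => ?_, fun x => ?_⟩
  · induction t with
    | zero => rw [map_zero, map_zero]
    | tmul v u =>
      rw [theta_tmul, hσ]
      refine (thetaInvAux_hom e hU 1 v u).trans ?_
      rw [MulOpposite.op_one, one_smul]
    | add x y hx hy => rw [map_add, map_add, hx, hy]
  · induction x using BalT.induction with
    | h0 => rw [map_zero, map_zero]
    | hmk m u =>
      rw [hσ, thetaInvAux_tmul, map_sum]
      conv_rhs => rw [← sum_coordEnd e m]
      let mkL : IndSub B V →+ BalT (Module.End A (IndSub B V)) A (IndSub B V) U :=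
        AddMonoidHom.mk' (fun m => BalT.mk _ _ _ _ m u) fun m m' => BalT.mk_add_left m m' u
      refine Eq.trans (Finset.sum_congr rfl fun i _ => ?_) (map_sum mkL _ _).symm
      rw [theta_tmul, ← BalT.mk_balanced]
      rfl
    | hadd x y hx hy => rw [map_add, map_add, hx, hy]

/-- The isomorphism `V ⊗_k U ≅ V↑^A ⊗_E U` of `B`-modules. -/
def thetaEquiv (e : IndSub B V ≃ₗ[↥B] (Fin n → V)) :
    V ⊗[k] U ≃ₗ[↥B] BalT (Module.End A (IndSub B V)) A (IndSub B V) U :=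
  LinearEquiv.ofBijective
    { toFun := theta hU
      map_add' := map_add _
      map_smul' := fun b t => by
        induction t with
        | zero => simp
        | tmul v u =>
          rw [TensorProduct.smul_tmul', theta_tmul, theta_tmul, LinearMap.map_smul]
          rfl
        | add x y hx hy => rw [smul_add, map_add, hx, hy, map_add, smul_add] }
    (theta_bijective hU e)

theorem thetaEquiv_tmul (v : V) (u : U) : thetaEquiv hU e (v ⊗ₜ u) =
    BalT.mk (Module.End A (IndSub B V)) A (IndSub B V) U (Ind.unit B V v) u := rfl

/-- The isomorphism `V↑^A ⊗_E U ≅ V^d` of `B`-modules given by a `k`-basis of `U`. -/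
def balEquivPi {d : ℕ} (b : Module.Basis (Fin d) k U) (e : IndSub B V ≃ₗ[↥B] (Fin n → V)) :
    BalT (Module.End A (IndSub B V)) A (IndSub B V) U ≃ₗ[↥B] (Fin d → V) :=
  (thetaEquiv hU e).symm ≪≫ₗ tensorEquivPi b

theorem balEquivPi_symm_single {d : ℕ} (b : Module.Basis (Fin d) k U) (i : Fin d) (v : V) :
    (balEquivPi hU b e).symm (Pi.single i v) =
      BalT.mk (Module.End A (IndSub B V)) A (IndSub B V) U (Ind.unit B V v) (b i) := by
  rw [← thetaEquiv_tmul hU e]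
  change thetaEquiv hU e ((tensorEquivPi (B := B) b).symm (Pi.single i v)) = _
  rw [tensorEquivPi_symm_single]

/-- Injectivity of `u ↦ v ⊗ u` for a single `v ≠ 0` suffices. -/
theorem psiMap_injective (e : IndSub B V ≃ₗ[↥B] (Fin n → V))
    (hU : ∀ (c : k) (e : (Module.End A (IndSub B V))ᵐᵒᵖ) (u : U), (c • e) • u = c • (e • u)) :
    Function.Injective (psiMap A (IndSub B V) U) := by
  have : Nontrivial V := IsSimpleModule.nontrivial ↥B V
  obtain ⟨v, hv⟩ := exists_ne (0 : V)
  obtain ⟨φ, hφ⟩ := Module.Projective.exists_dual_eq_one k hv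
  intro u u' h
  have h1 : theta hU (v ⊗ₜ u) = theta hU (v ⊗ₜ u') := LinearMap.congr_fun h (Ind.unit B V v)
  have h2 := (theta_bijective hU e).1 h1
  have h3 := congrArg ((TensorProduct.lid k U).toLinearMap ∘ₗ LinearMap.rTensor U φ) h2
  simpa [hφ] using h3

/-- By Frobenius reciprocity an `A`-linear map `V↑^A → V↑^A ⊗_E U` is a `B`-linear map `V → V^d`;
Schur's lemma identifies it with a vector of `k^d ≅ U`. -/
theorem psiMap_surjective [FiniteDimensional k U] (e : IndSub B V ≃ₗ[↥B] (Fin n → V))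
    (hU : ∀ (c : k) (e : (Module.End A (IndSub B V))ᵐᵒᵖ) (u : U), (c • e) • u = c • (e • u)) :
    Function.Surjective (psiMap A (IndSub B V) U) := by
  intro f
  have : IsScalarTower k ↥B (BalT (Module.End A (IndSub B V)) A (IndSub B V) U) :=
    Subalgebra.isScalarTower_mid ..
  let b := Module.finBasis k U
  obtain ⟨c, hc⟩ := schur_expand (k := k) (balEquivPi hU b e)
    (f.restrictScalars ↥B ∘ₗ Ind.unit B V)
  refine ⟨∑ i, c i • b i, Ind.hom_ext fun v => ?_⟩
  change theta hU (v ⊗ₜ ∑ i, c i • b i) = _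
  refine Eq.trans ?_ (hc v).2.symm
  rw [TensorProduct.tmul_sum, map_sum]
  refine Finset.sum_congr rfl fun i _ => ?_
  rw [TensorProduct.tmul_smul, map_smul, balEquivPi_symm_single, theta_tmul]

end Theta

/-! ### The counit -/

section Counit

variable {N : Type*} [AddCommGroup N] [Module A N] [Module k N] [IsScalarTower k A N]

/-- The `k`- and `E`-actions on `Hom_A(V↑^A, N)` are compatible, as required of `U` in `theta`. -/
theorem hom_compat (c : k) (e : (Module.End A (IndSub B V))ᵐᵒᵖ) (f : IndSub B V →ₗ[A] N) :
    (c • e) • f = c • (e • f) := by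
  ext m
  exact f.map_smul_of_tower c (e.unop m)

theorem finiteDimensional_hom [FiniteDimensional k V] [FiniteDimensional k N] :
    FiniteDimensional k (IndSub B V →ₗ[A] N) := by
  let r : (IndSub B V →ₗ[A] N) →ₗ[k] (V →ₗ[k] N) :=
    { toFun := fun f =>
        { toFun := fun v => f (Ind.unit B V v)
          map_add' := fun v w => by rw [map_add, map_add]
          map_smul' := fun c v => by
            rw [Ind.unit_smul, LinearMap.map_smul_of_tower, RingHom.id_apply] }
      map_add' := fun f g => rfl
      map_smul' := fun c f => rfl }
  exact FiniteDimensional.of_injective r fun f g h => Ind.hom_ext fun v => LinearMap.congr_fun h v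

variable [IsAlgClosed k] [FiniteDimensional k V] [IsSimpleModule ↥B V]

/-- Composed with `theta` for `U = Hom_A(V↑^A, N)`, the counit becomes the evaluation
`V ⊗_k Hom_B(V, N) → N`, which is bijective when `N ≅ V^m` over `B`. -/
theorem phiMap_bijective {n m : ℕ} (e : IndSub B V ≃ₗ[↥B] (Fin n → V))
    (eN : N ≃ₗ[↥B] (Fin m → V)) : Function.Bijective (phiMap A (IndSub B V) N) := by
  let θ := theta (U := IndSub B V →ₗ[A] N) (hom_compat (k := k))
  have hθ : Function.Bijective θ := theta_bijective _ e
  let ι : Fin m → IndSub B V →ₗ[A] N := fun i =>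
    Ind.lift (eN.symm.toLinearMap ∘ₗ LinearMap.single ↥B (fun _ => V) i).toAddMonoidHom
      (LinearMap.map_smul (eN.symm.toLinearMap ∘ₗ LinearMap.single ↥B (fun _ => V) i))
  have hι : ∀ i v, ι i (Ind.unit B V v) = eN.symm (Pi.single i v) :=
    fun i v => one_smul A (eN.symm (Pi.single i v))
  have hφθ : ∀ v f, phiMap A (IndSub B V) N (θ (v ⊗ₜ f)) = f (Ind.unit B V v) := fun v f => rfl
  suffices h : Function.Bijective (phiMap A (IndSub B V) N ∘ θ) from
    (Function.Bijective.of_comp_iff _ hθ).1 h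
  -- By Schur's lemma the inverse of `v ⊗ f ↦ f (1 ⊗ v)` is `x ↦ ∑ i, xᵢ ⊗ ιᵢ`.
  refine Function.bijective_iff_has_inverse.2
    ⟨fun x => ∑ i, eN x i ⊗ₜ[k] ι i, fun t => ?_, fun x => ?_⟩
  · induction t with
    | zero => simp
    | tmul v f =>
      obtain ⟨c, hc⟩ := schur_expand (k := k) eN (f.restrictScalars ↥B ∘ₗ Ind.unit B V)
      have hf : f = ∑ i, c i • ι i := by
        refine Ind.hom_ext fun v => ?_
        rw [LinearMap.sum_apply]
        refine (hc v).2.trans (Finset.sum_congr rfl fun i _ => ?_)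
        rw [LinearMap.smul_apply, hι]
      conv_rhs => rw [hf, TensorProduct.tmul_sum]
      refine Finset.sum_congr rfl fun i _ => ?_
      rw [TensorProduct.tmul_smul, TensorProduct.smul_tmul']
      exact congrArg (· ⊗ₜ[k] ι i) ((hc v).1 i)
    | add x y hx hy =>
      conv_rhs => rw [← hx, ← hy]
      simp only [Function.comp_apply, map_add, Pi.add_apply, TensorProduct.add_tmul,
        Finset.sum_add_distrib]
  · change phiMap A (IndSub B V) N (θ (∑ i, eN x i ⊗ₜ[k] ι i)) = x
    simp_rw [map_sum, hφθ, hι]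
    rw [← map_sum, Finset.univ_sum_single, LinearEquiv.symm_apply_apply]

end Counit

end Core

/-- (Stable equivalence, Theorem `stable-a`.)  Let `k` be
algebraically closed, `B ⊆ A` algebras over `k`, `V` a finite-dimensional simple
`A`-stable `B`-module, `E = End_A(V↑^A)ᵒᵖ`.  The functors `U ↦ V↑^A ⊗_E U` and
`N ↦ Hom_A(V↑^A, N)` induce a bijection between isomorphism classes of
finite-dimensional `E`-modules and isomorphism classes of finite-dimensional
`A`-modules whose restriction to `B` is a direct sum of copies of `V`: each
functor maps one class into the other, and the canonical unit and counit maps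
`ψ : U → Hom_A(M, M ⊗_E U)` and `φ : M ⊗_E Hom_A(M,N) → N` are isomorphisms. -/
theorem stmt_8 (k : Type*) [Field k] [IsAlgClosed k]
    (A : Type*) [Ring A] [Algebra k A] (B : Subalgebra k A)
    (V : Type*) [AddCommGroup V] [Module k V] [Module ↥B V] [IsScalarTower k ↥B V]
    [FiniteDimensional k V] [IsSimpleModule ↥B V]
    (hstable : ∃ n : ℕ, Nonempty ((Ind B.val.toRingHom V) ≃ₗ[↥B] (Fin n → V))) :
    (∀ (U : Type u) [AddCommGroup U]
        [Module (Module.End A (Ind B.val.toRingHom V))ᵐᵒᵖ U] [Module k U]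
        [FiniteDimensional k U],
      (∀ (c : k) (e : (Module.End A (Ind B.val.toRingHom V))ᵐᵒᵖ) (u : U),
          (c • e) • u = c • (e • u)) →
        (FiniteDimensional k
            (BalT (Module.End A (Ind B.val.toRingHom V)) A (Ind B.val.toRingHom V) U) ∧
          (∃ n : ℕ, Nonempty
            ((BalT (Module.End A (Ind B.val.toRingHom V)) A (Ind B.val.toRingHom V) U)
              ≃ₗ[↥B] (Fin n → V))) ∧
          Function.Bijective (psiMap A (Ind B.val.toRingHom V) U) ∧
          ∀ (e : (Module.End A (Ind B.val.toRingHom V))ᵐᵒᵖ) (u : U),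
            psiMap A (Ind B.val.toRingHom V) U (e • u)
              = e • psiMap A (Ind B.val.toRingHom V) U u)) ∧
    (∀ (N : Type u) [AddCommGroup N] [Module A N] [Module k N] [IsScalarTower k A N]
        [FiniteDimensional k N],
      (∃ n : ℕ, Nonempty (N ≃ₗ[↥B] (Fin n → V))) →
        (FiniteDimensional k ((Ind B.val.toRingHom V) →ₗ[A] N) ∧
          Function.Bijective (phiMap A (Ind B.val.toRingHom V) N))) := by
  obtain ⟨n, ⟨e⟩⟩ := hstable
  refine ⟨?_, ?_⟩
  · intro U _ _ _ _ hU
    refine ⟨?_, ⟨_, ⟨balEquivPi hU (Module.finBasis k U) e⟩⟩,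
      ⟨psiMap_injective e hU, psiMap_surjective e hU⟩, fun s u => ?_⟩
    · exact Module.Finite.of_surjective (theta hU) (theta_bijective hU e).2
    · ext m
      exact (BalT.mk_balanced (Amb := A) s.unop m u).symm
  · rintro N _ _ _ _ _ ⟨m, ⟨eN⟩⟩
    exact ⟨finiteDimensional_hom, phiMap_bijective (k := k) e eN⟩
end
end
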